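/- There exist constants C ≥ 1 and Q > 1, depending only on C_d and C_P, such that for every u ∈ BV(X), every Lebesgue point x of u, and every r > 0: (⨍_{B(x,r)} |u − u(x)|^{Q/(Q−1)} dμ)^{(Q−1)/Q} ≤ C·r·sup_{0<ρ≤2r} V(u,B(x,ρ))/μ(B(x,ρ)). -/

import Mathlib

open MeasureTheory Metric Filter Set Topology
open scoped NNReal ENNReal

noncomputable section

universe u

/-- The measure `μ` is doubling with constant `Cd`:
`0 < μ(B(x,2r)) ≤ Cd·μ(B(x,r)) < ∞` for every `x` and every `r > 0`. -/
def IsDoublingWith {X : Type u} [PseudoMetricSpace X] [MeasurableSpace X]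
    (μ : Measure X) (Cd : ℝ≥0) : Prop :=
  ∀ (x : X) (r : ℝ), 0 < r →
    0 < μ (ball x (2 * r)) ∧
      μ (ball x (2 * r)) ≤ (Cd : ℝ≥0∞) * μ (ball x r) ∧
      (Cd : ℝ≥0∞) * μ (ball x r) < ⊤

/-- `X` is a geodesic space: any two points are joined by a unit-speed geodesic. -/
def IsGeodesic (X : Type u) [PseudoMetricSpace X] : Prop :=
  ∀ x y : X, ∃ γ : ℝ → X,
    LipschitzOnWith 1 γ (Icc 0 (dist x y)) ∧ γ 0 = x ∧ γ (dist x y) = y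

/-- `g` is an upper gradient of `u`: for every `L ≥ 0` and every `1`-Lipschitz curve
`γ : [0,L] → X`, `|u(γ 0) − u(γ L)| ≤ ∫₀^L g(γ t) dt`. -/
def IsUpperGradientOf {X : Type u} [PseudoMetricSpace X] (g u : X → ℝ) : Prop :=
  ∀ L : ℝ, 0 ≤ L → ∀ γ : ℝ → X, LipschitzOnWith 1 γ (Icc 0 L) →
    |u (γ 0) - u (γ L)| ≤ ∫ t in (0:ℝ)..L, g (γ t)

/-- The lower pointwise Lipschitz constant
`lip u (x) = liminf_{r→0} r⁻¹ sup_{y ∈ B(x,r)} |u y − u x|`. -/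
def lipConst {X : Type u} [PseudoMetricSpace X] (u : X → ℝ) (x : X) : ℝ≥0∞ :=
  Filter.liminf
    (fun r : ℝ => ⨆ y ∈ ball x r, ENNReal.ofReal (|u y - u x| / r)) (𝓝[>] (0:ℝ))

/-- `u` is locally Lipschitz on `W`: Lipschitz on every closed bounded subset of `W`. -/
def LocallyLipschitzOnSet {X : Type u} [PseudoMetricSpace X] (u : X → ℝ) (W : Set X) : Prop :=
  ∀ K : Set X, IsClosed K → Bornology.IsBounded K → K ⊆ W →
    ∃ L : ℝ≥0, LipschitzOnWith L u K

/-- `u i → f` in `L¹_loc(W)`. -/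
def TendstoL1loc {X : Type u} [PseudoMetricSpace X] [MeasurableSpace X]
    (μ : Measure X) (u : ℕ → X → ℝ) (f : X → ℝ) (W : Set X) : Prop :=
  ∀ K : Set X, IsClosed K → Bornology.IsBounded K → K ⊆ W →
    Tendsto (fun i => ∫⁻ x in K, ENNReal.ofReal |u i x - f x| ∂μ) atTop (𝓝 0)

/-- Total variation `V(f,W)` of `f` on an open set `W`:
the infimum over sequences of locally Lipschitz functions converging to `f` in `L¹_loc(W)`
of the liminf of `∫_W lip u_i dμ`. -/
def totVarOn {X : Type u} [PseudoMetricSpace X] [MeasurableSpace X]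
    (μ : Measure X) (f : X → ℝ) (W : Set X) : ℝ≥0∞ :=
  ⨅ (us : ℕ → X → ℝ) (_ : ∀ i, LocallyLipschitzOnSet (us i) W)
    (_ : TendstoL1loc μ us f W),
    Filter.liminf (fun i => ∫⁻ x in W, lipConst (us i) x ∂μ) atTop

/-- Total variation `V(f,A)` of `f` on an arbitrary set `A`:
infimum of `V(f,W)` over open `W ⊇ A`. -/
def totVarSet {X : Type u} [PseudoMetricSpace X] [MeasurableSpace X]
    (μ : Measure X) (f : X → ℝ) (A : Set X) : ℝ≥0∞ :=
  ⨅ (W : Set X) (_ : IsOpen W) (_ : A ⊆ W), totVarOn μ f W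

/-- `f` is of bounded variation: locally integrable and `V(f,X) < ∞`. -/
def IsBV {X : Type u} [MetricSpace X] [MeasurableSpace X]
    (μ : Measure X) (f : X → ℝ) : Prop :=
  LocallyIntegrable f μ ∧ totVarOn μ f Set.univ < ⊤

/-- `(X,d,μ)` supports a `1`-Poincaré inequality with constant `CP`. -/
def SupportsPoincare {X : Type u} [MetricSpace X] [MeasurableSpace X]
    (μ : Measure X) (CP : ℝ) : Prop :=
  ∀ u : X → ℝ, LocallyLipschitzOnSet u Set.univ →
    ∀ g : X → ℝ, (∀ x, 0 ≤ g x) → Measurable g → IsUpperGradientOf g u →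
      ∀ (x : X) (r : ℝ), 0 < r →
        (⨍ y in ball x r, |u y - (⨍ z in ball x r, u z ∂μ)| ∂μ) ≤
          CP * r * (⨍ y in ball x r, g y ∂μ)

/-- Standing assumptions: a complete geodesic metric measure space with at least two
points, whose measure is doubling and supports a 1-Poincaré inequality. -/
def GoodSpace (X : Type u) [MetricSpace X] [MeasurableSpace X]
    (μ : Measure X) (Cd : ℝ≥0) (CP : ℝ) : Prop :=
  Nontrivial X ∧ CompleteSpace X ∧ IsGeodesic X ∧
    IsDoublingWith μ Cd ∧ SupportsPoincare μ CP

/-- The codimension-1 Hausdorff measure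
`𝓗(A) = sup_{δ>0} inf { Σ μ(B_i)/r_i : 0 < r_i ≤ δ, A ⊆ ⋃ B_i }`,
the infimum over countable coverings of `A` by balls (balls of nonpositive radius
are empty and contribute `0`). -/
def codimOneH {X : Type u} [PseudoMetricSpace X] [MeasurableSpace X]
    (μ : Measure X) (A : Set X) : ℝ≥0∞ :=
  ⨆ (δ : ℝ) (_ : 0 < δ),
    ⨅ (c : ℕ → X) (r : ℕ → ℝ) (_ : ∀ i, r i ≤ δ)
      (_ : A ⊆ ⋃ i, ball (c i) (r i)),
      ∑' i, if 0 < r i then μ (ball (c i) (r i)) / ENNReal.ofReal (r i) else 0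

/-- The measure theoretic boundary `∂*E`. -/
def measBdry {X : Type u} [PseudoMetricSpace X] [MeasurableSpace X]
    (μ : Measure X) (E : Set X) : Set X :=
  {x : X |
    0 < Filter.limsup (fun r : ℝ => μ (E ∩ ball x r) / μ (ball x r)) (𝓝[>] (0:ℝ)) ∧
    0 < Filter.limsup (fun r : ℝ => μ (Eᶜ ∩ ball x r) / μ (ball x r)) (𝓝[>] (0:ℝ))}

/-- `A` has density `0` at `x`. -/
def DensityZeroAt {X : Type u} [PseudoMetricSpace X] [MeasurableSpace X]
    (μ : Measure X) (A : Set X) (x : X) : Prop :=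
  Tendsto (fun r : ℝ => μ (A ∩ ball x r) / μ (ball x r)) (𝓝[>] (0:ℝ)) (𝓝 0)

/-- `A` has density `1` at `x`. -/
def DensityOneAt {X : Type u} [PseudoMetricSpace X] [MeasurableSpace X]
    (μ : Measure X) (A : Set X) (x : X) : Prop :=
  Tendsto (fun r : ℝ => μ (A ∩ ball x r) / μ (ball x r)) (𝓝[>] (0:ℝ)) (𝓝 1)

/-- `x` is a Lebesgue point of `u`. -/
def LebesguePointOf {X : Type u} [MetricSpace X] [MeasurableSpace X]
    (μ : Measure X) (u : X → ℝ) (x : X) : Prop :=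
  Tendsto (fun r : ℝ => ⨍ y in ball x r, |u y - u x| ∂μ) (𝓝[>] (0:ℝ)) (𝓝 0)

/-- `u` is a Borel representative whose value at each Lebesgue point equals the limit
of its ball averages. -/
def PreciseRep {X : Type u} [MetricSpace X] [MeasurableSpace X]
    (μ : Measure X) (u : X → ℝ) : Prop :=
  Measurable u ∧ ∀ (x : X) (c : ℝ),
    Tendsto (fun r : ℝ => ⨍ y in ball x r, u y ∂μ) (𝓝[>] (0:ℝ)) (𝓝 c) → u x = c

/-- The restricted maximal function `M_R ν (x) = sup_{0<r≤R} ν(B(x,r))/μ(B(x,r))`. -/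
def restrMaximal {X : Type u} [PseudoMetricSpace X] [MeasurableSpace X]
    (μ ν : Measure X) (R : ℝ) (x : X) : ℝ≥0∞ :=
  ⨆ (r : ℝ) (_ : 0 < r) (_ : r ≤ R), ν (ball x r) / μ (ball x r)

/-- `F_g(x,y)`: the infimum of `∫_γ g ds` over 1-Lipschitz curves `γ : [0,L] → Z`
joining `x` to `y` (the infimum over the empty set is `∞`). -/
def curveInf {Z : Type u} [PseudoMetricSpace Z] (g : Z → ℝ) (x y : Z) : ℝ≥0∞ :=
  ⨅ (L : ℝ) (_ : 0 ≤ L) (γ : ℝ → Z) (_ : LipschitzOnWith 1 γ (Icc 0 L))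
    (_ : γ 0 = x) (_ : γ L = y),
    ∫⁻ t in Icc (0:ℝ) L, ENNReal.ofReal (g (γ t))

/-- Weak-star convergence of measures: test against continuous, compactly
supported functions. -/
def WeakStar {Z : Type u} [MetricSpace Z] [MeasurableSpace Z]
    (ν : ℕ → Measure Z) (m : Measure Z) : Prop :=
  ∀ φ : Z → ℝ, Continuous φ → HasCompactSupport φ →
    Tendsto (fun n => ∫ x, φ x ∂(ν n)) atTop (𝓝 (∫ x, φ x ∂m))

/-- `φ ∈ BV_c(U)`: a BV function whose support is compact and contained in `U`. -/
def MemBVc {X : Type u} [MetricSpace X] [MeasurableSpace X]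
    (μ : Measure X) (φ : X → ℝ) (U : Set X) : Prop :=
  IsBV μ φ ∧ IsCompact (tsupport φ) ∧ tsupport φ ⊆ U

/-!
For a Lipschitz function `v` and `y ∈ B(x,2s)`, telescoping the averages of `v` over the balls
`B(y,s/2ᵏ)` and applying the Poincaré inequality on each of them, with upper gradient `lip v`,
bounds `|v(y) − v_{B(x,3s)}|` by a multiple of `s · ∑ₖ 2⁻ᵏ ⨍_{B(y,s/2ᵏ)} lip v dμ`, up to one
further term from `B(x,3s)`. The operator averaging at scale `s/2ᵏ` has `L¹ → L¹` norm at most a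
constant and `L¹ → L^∞` norm at most a constant times `Cdᵏ`, with respect to normalised measures,
hence `L¹ → Lᵖ` norm at most a constant times `Cd^(k/Q)` for `p = Q/(Q−1)`. When `Q` is so large
that `Cd^(1/Q) ≤ 3/2`, the series of `Lᵖ` norms is geometric with ratio `3/4`. The resulting
Sobolev–Poincaré inequality passes from Lipschitz functions to `u` by Fatou's lemma, and at a
Lebesgue point telescoping once more, along concentric balls, replaces the average of `u` by `u(x)`.
-/

open scoped ProbabilityTheory

section Doubling

variable {X : Type u} [PseudoMetricSpace X] [MeasurableSpace X] {μ : Measure X} {Cd : ℝ≥0}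

namespace IsDoublingWith

theorem measure_ball_pos (h : IsDoublingWith μ Cd) (x : X) {r : ℝ} (hr : 0 < r) :
    0 < μ (ball x r) := by
  simpa only [mul_div_cancel₀ r two_ne_zero] using (h x (r / 2) (half_pos hr)).1

theorem measure_ball_lt_top (h : IsDoublingWith μ Cd) (x : X) (r : ℝ) : μ (ball x r) < ⊤ := by
  rcases le_or_gt r 0 with hr | hr
  · simp [ball_eq_empty.2 hr]
  · obtain ⟨hpos, hle, hlt⟩ := h x r hr
    exact ENNReal.lt_top_of_mul_ne_top_right hlt.ne (left_ne_zero_of_mul (hpos.trans_le hle).ne')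

theorem isProbabilityMeasure_cond_ball (h : IsDoublingWith μ Cd) (x : X) {r : ℝ} (hr : 0 < r) :
    IsProbabilityMeasure μ[|ball x r] :=
  ProbabilityTheory.cond_isProbabilityMeasure_of_finite (h.measure_ball_pos x hr).ne'
    (h.measure_ball_lt_top x r).ne

theorem one_le_of_point (h : IsDoublingWith μ Cd) (x : X) : 1 ≤ (Cd : ℝ≥0∞) := by
  refine (ENNReal.mul_le_mul_iff_left (h.measure_ball_pos x one_pos).ne'
    (h.measure_ball_lt_top x 1).ne).1 ?_
  calc 1 * μ (ball x 1) = μ (ball x 1) := one_mul _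
    _ ≤ μ (ball x (2 * 1)) := measure_mono (ball_subset_ball (by norm_num))
    _ ≤ Cd * μ (ball x 1) := (h x 1 one_pos).2.1

theorem measure_ball_two_pow_mul_le (h : IsDoublingWith μ Cd) (x : X) {r : ℝ} (hr : 0 < r)
    (n : ℕ) : μ (ball x (2 ^ n * r)) ≤ (Cd : ℝ≥0∞) ^ n * μ (ball x r) := by
  induction n with
  | zero => simp
  | succ n ih =>
    calc μ (ball x (2 ^ (n + 1) * r)) = μ (ball x (2 * (2 ^ n * r))) := by ring_nf
      _ ≤ Cd * μ (ball x (2 ^ n * r)) := (h x _ (by positivity)).2.1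
      _ ≤ Cd * ((Cd : ℝ≥0∞) ^ n * μ (ball x r)) := by gcongr
      _ = (Cd : ℝ≥0∞) ^ (n + 1) * μ (ball x r) := by ring

theorem measure_ball_le (h : IsDoublingWith μ Cd) {x y : X} {r s : ℝ} (hr : 0 < r) (n : ℕ)
    (hs : s + dist y x ≤ 2 ^ n * r) : μ (ball y s) ≤ (Cd : ℝ≥0∞) ^ n * μ (ball x r) :=
  (measure_mono (ball_subset_ball' hs)).trans (h.measure_ball_two_pow_mul_le x hr n)

theorem sigmaFinite (h : IsDoublingWith μ Cd) : SigmaFinite μ := by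
  rcases isEmpty_or_nonempty X with hX | ⟨⟨x₀⟩⟩
  · rw [Measure.eq_zero_of_isEmpty μ]
    infer_instance
  · exact ⟨⟨⟨fun n => ball x₀ n, fun _ => trivial,
      fun n => h.measure_ball_lt_top _ _, iUnion_ball_nat x₀⟩⟩⟩

theorem secondCountableTopology [OpensMeasurableSpace X] (h : IsDoublingWith μ Cd) :
    SecondCountableTopology X := by
  have := h.sigmaFinite
  refine secondCountable_of_almost_dense_set fun ε hε => ?_
  have hε' : 0 < ε / 5 := by positivity
  obtain ⟨t, -, hdisj, hcover⟩ := Vitali.exists_disjoint_subfamily_covering_enlargement_closedBall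
    (univ : Set X) id (fun _ => ε / 5) (ε / 5) (fun _ _ => le_rfl) 5 (by norm_num)
  refine ⟨t, ?_, fun x => ?_⟩
  · have hpos : {y : t | 0 < μ (closedBall (y : X) (ε / 5))} = univ :=
      eq_univ_of_forall fun y =>
        (h.measure_ball_pos y hε').trans_le (measure_mono ball_subset_closedBall)
    refine countable_univ_iff.1 (hpos ▸ Measure.countable_meas_pos_of_disjoint_iUnion
      (fun _ => isClosed_closedBall.measurableSet) fun a b hab => ?_)
    exact hdisj a.2 b.2 fun hab' => hab (Subtype.ext hab')
  · obtain ⟨y, hy, hxy⟩ := hcover x (mem_univ x)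
    exact ⟨y, hy, by simpa [mul_div_cancel₀] using hxy (mem_closedBall_self hε'.le)⟩

end IsDoublingWith

end Doubling

section Averages

variable {X : Type u} [MeasurableSpace X] {μ ν : Measure X}

theorem enorm_integral_sub_le_lintegral_enorm_sub {E : Type*} [NormedAddCommGroup E]
    [NormedSpace ℝ E] [CompleteSpace E] [IsProbabilityMeasure ν] {f : X → E} (hf : Integrable f ν)
    (c : E) : ‖(∫ z, f z ∂ν) - c‖ₑ ≤ ∫⁻ z, ‖f z - c‖ₑ ∂ν := by
  have hsub : (∫ z, f z ∂ν) - c = ∫ z, f z - c ∂ν := by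
    rw [integral_sub hf (integrable_const c), integral_const, probReal_univ, one_smul]
  rw [hsub]
  exact enorm_integral_le_lintegral_enorm _

theorem enorm_setAverage_sub_le_setLAverage {E : Type*} [NormedAddCommGroup E]
    [NormedSpace ℝ E] [CompleteSpace E] {S : Set X} (h0 : μ S ≠ 0) (htop : μ S ≠ ⊤) {f : X → E}
    (hf : IntegrableOn f S μ) (c : E) :
    ‖(⨍ z in S, f z ∂μ) - c‖ₑ ≤ ⨍⁻ z in S, ‖f z - c‖ₑ ∂μ := by
  have := ProbabilityTheory.cond_isProbabilityMeasure_of_finite h0 htop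
  rw [setAverage_eq', setLAverage_eq']
  exact enorm_integral_sub_le_lintegral_enorm_sub (ν := μ[|S])
    (hf.smul_measure (ENNReal.inv_ne_top.2 h0)) c

theorem setLAverage_le_mul_setLAverage {S T : Set X} {C : ℝ≥0∞} (hST : S ⊆ T) (htop : μ T ≠ ⊤)
    (hμ : μ T ≤ C * μ S) (f : X → ℝ≥0∞) :
    ⨍⁻ z in S, f z ∂μ ≤ C * ⨍⁻ z in T, f z ∂μ := by
  rw [setLAverage_eq]
  refine ENNReal.div_le_of_le_mul ?_
  calc ∫⁻ z in S, f z ∂μ ≤ ∫⁻ z in T, f z ∂μ := lintegral_mono_set hST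
    _ = μ T * ⨍⁻ z in T, f z ∂μ := (measure_mul_setLAverage f htop).symm
    _ ≤ C * μ S * ⨍⁻ z in T, f z ∂μ := by gcongr
    _ = C * (⨍⁻ z in T, f z ∂μ) * μ S := by ring

theorem eLpNorm_le_rpow_mul_lintegral_rpow {f : X → ℝ≥0∞} {p M : ℝ≥0∞} (hp : 1 ≤ p)
    (hp_top : p ≠ ⊤) (hf : AEMeasurable f ν) (hM : ∀ᵐ y ∂ν, f y ≤ M) :
    eLpNorm f p ν ≤ M ^ (1 - p.toReal⁻¹) * (∫⁻ y, f y ∂ν) ^ p.toReal⁻¹ := by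
  have hp1 : 1 ≤ p.toReal := by simpa using ENNReal.toReal_mono hp_top hp
  have hp0 : p.toReal ≠ 0 := (one_pos.trans_le hp1).ne'
  have hpow : ∫⁻ y, f y ^ p.toReal ∂ν ≤ M ^ (p.toReal - 1) * ∫⁻ y, f y ∂ν := by
    rw [← lintegral_const_mul'' _ hf]
    refine lintegral_mono_ae (hM.mono fun y hy => ?_)
    calc f y ^ p.toReal = f y ^ (p.toReal - 1) * f y := by
          conv_lhs =>
            rw [← sub_add_cancel p.toReal 1, ENNReal.rpow_add_of_nonneg _ _ (sub_nonneg.2 hp1)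
              zero_le_one, ENNReal.rpow_one]
      _ ≤ M ^ (p.toReal - 1) * f y := by gcongr
  rw [eLpNorm_eq_lintegral_rpow_enorm_toReal (one_pos.trans_le hp).ne' hp_top, one_div]
  simp only [enorm_eq_self]
  calc (∫⁻ y, f y ^ p.toReal ∂ν) ^ p.toReal⁻¹
      ≤ (M ^ (p.toReal - 1) * ∫⁻ y, f y ∂ν) ^ p.toReal⁻¹ := by gcongr
    _ = M ^ (1 - p.toReal⁻¹) * (∫⁻ y, f y ∂ν) ^ p.toReal⁻¹ := by
        rw [ENNReal.mul_rpow_of_nonneg _ _ (by positivity), ← ENNReal.rpow_mul, sub_mul, one_mul,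
          mul_inv_cancel₀ hp0]

theorem lintegral_tsum_rpow {f : ℕ → X → ℝ≥0∞} (hf : ∀ k, AEMeasurable (f k) ν) {q : ℝ}
    (hq : 0 < q) :
    ∫⁻ y, (∑' k, f k y) ^ q ∂ν = ⨆ n, ∫⁻ y, (∑ k ∈ Finset.range n, f k y) ^ q ∂ν := by
  rw [← lintegral_iSup' (fun n => (Finset.aemeasurable_fun_sum _ fun k _ => hf k).pow_const q)
    (ae_of_all _ fun y m n hmn => by beta_reduce; gcongr)]
  refine lintegral_congr fun y => ?_
  rw [ENNReal.tsum_eq_iSup_nat]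
  exact (ENNReal.orderIsoRpow q hq).map_iSup _

theorem eLpNorm_tsum_le {f : ℕ → X → ℝ≥0∞} (hf : ∀ k, AEMeasurable (f k) ν) {p : ℝ≥0∞}
    (hp : 1 ≤ p) (hp_top : p ≠ ⊤) :
    eLpNorm (fun y => ∑' k, f k y) p ν ≤ ∑' k, eLpNorm (f k) p ν := by
  have hp0 : p ≠ 0 := (one_pos.trans_le hp).ne'
  have hpr : 0 < p.toReal := ENNReal.toReal_pos hp0 hp_top
  rw [eLpNorm_eq_lintegral_rpow_enorm_toReal hp0 hp_top, one_div, ENNReal.rpow_inv_le_iff hpr]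
  simp only [enorm_eq_self]
  rw [lintegral_tsum_rpow hf hpr]
  refine iSup_le fun n => ?_
  rw [← ENNReal.rpow_inv_le_iff hpr]
  calc (∫⁻ y, (∑ k ∈ Finset.range n, f k y) ^ p.toReal ∂ν) ^ p.toReal⁻¹
      = eLpNorm (∑ k ∈ Finset.range n, f k) p ν := by
        simp only [eLpNorm_eq_lintegral_rpow_enorm_toReal hp0 hp_top, one_div, enorm_eq_self,
          Finset.sum_apply]
    _ ≤ ∑ k ∈ Finset.range n, eLpNorm (f k) p ν :=
        eLpNorm_sum_le (fun k _ => (hf k).aestronglyMeasurable) hp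
    _ ≤ ∑' k, eLpNorm (f k) p ν := ENNReal.sum_le_tsum _

theorem eLpNorm_const_mul_le {c : ℝ≥0∞} (hc : c ≠ ⊤) (f : X → ℝ≥0∞) {p : ℝ≥0∞} :
    eLpNorm (fun y => c * f y) p ν ≤ c * eLpNorm f p ν := by
  lift c to ℝ≥0 using hc
  exact eLpNorm_le_nnreal_smul_eLpNorm_of_ae_le_mul' (ae_of_all _ fun y => le_rfl) p

theorem ofReal_integral_rpow_le_eLpNorm (f : X → ℝ) {p : ℝ} (hp : 0 < p) :
    ENNReal.ofReal ((∫ y, |f y| ^ p ∂ν) ^ p⁻¹) ≤ eLpNorm f (ENNReal.ofReal p) ν := by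
  have hint : 0 ≤ ∫ y, |f y| ^ p ∂ν := integral_nonneg fun y => by positivity
  rw [eLpNorm_eq_lintegral_rpow_enorm_toReal (by simpa using hp) ENNReal.ofReal_ne_top,
    ENNReal.toReal_ofReal hp.le, one_div, ← ENNReal.ofReal_rpow_of_nonneg hint (by positivity),
    ← Real.enorm_of_nonneg hint]
  refine ENNReal.rpow_le_rpow ((enorm_integral_le_lintegral_enorm _).trans_eq ?_) (by positivity)
  refine lintegral_congr fun y => ?_
  rw [Real.enorm_rpow_of_nonneg (abs_nonneg _) hp.le, Real.enorm_abs]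

theorem eLpNorm_sub_setAverage_le_of_tendsto {f : ℕ → X → ℝ} {u : X → ℝ} {S : Set X}
    (hν : ν ≪ μ.restrict S) (hf : ∀ i, IntegrableOn (f i) S μ) (hu : IntegrableOn u S μ)
    (hfu : Tendsto (fun i => ∫⁻ y in S, ‖f i y - u y‖ₑ ∂μ) atTop (𝓝 0)) {p B : ℝ≥0∞}
    (hB : ∀ i, eLpNorm (fun y => f i y - ⨍ z in S, f i z ∂μ) p ν ≤ B) :
    eLpNorm (fun y => u y - ⨍ z in S, u z ∂μ) p ν ≤ B := by
  have hL1 : Tendsto (fun i => eLpNorm (f i - u) 1 (μ.restrict S)) atTop (𝓝 0) := by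
    simpa only [eLpNorm_one_eq_lintegral_enorm, Pi.sub_apply] using hfu
  obtain ⟨φ, hφ, hae⟩ := (tendstoInMeasure_of_tendsto_eLpNorm one_ne_zero
    (fun i => (hf i).aestronglyMeasurable) hu.aestronglyMeasurable hL1).exists_seq_tendsto_ae
  have havg : Tendsto (fun i => ⨍ z in S, f i z ∂μ) atTop (𝓝 (⨍ z in S, u z ∂μ)) := by
    simp only [setAverage_eq]
    exact (tendsto_integral_of_L1 u hu.aestronglyMeasurable (Eventually.of_forall hf)
      hfu).const_smul _
  refine (Lp.eLpNorm_lim_le_liminf_eLpNorm (f := fun i y => f (φ i) y - ⨍ z in S, f (φ i) z ∂μ)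
    (fun i => ((hf _).aestronglyMeasurable.mono_ac hν).sub aestronglyMeasurable_const) _ ?_).trans
    (liminf_le_of_le (by isBoundedDefault) fun b hb => ?_)
  · filter_upwards [hν.ae_le hae] with y hy
    exact hy.sub (havg.comp hφ.tendsto_atTop)
  · obtain ⟨i, hi⟩ := hb.exists
    exact hi.trans (hB _)

end Averages

section AveragingOperator

section Fubini

variable {X : Type u} [PseudoMetricSpace X] [SecondCountableTopology X] [MeasurableSpace X]
  [BorelSpace X] {μ : Measure X} [SFinite μ]

theorem measurableSet_setOf_dist_lt (s : ℝ) : MeasurableSet {z : X × X | dist z.2 z.1 < s} :=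
  (isOpen_lt (by fun_prop) continuous_const).measurableSet

theorem measurable_setLIntegral_ball (s : ℝ) {g : X → ℝ≥0∞} (hg : Measurable g) :
    Measurable fun y => ∫⁻ z in ball y s, g z ∂μ := by
  simp only [← lintegral_indicator measurableSet_ball]
  exact ((hg.comp measurable_snd).indicator (measurableSet_setOf_dist_lt s)).lintegral_prod_right'

theorem measurable_measure_ball (s : ℝ) : Measurable fun y => μ (ball y s) := by
  simpa only [setLIntegral_one] using
    measurable_setLIntegral_ball (μ := μ) s (measurable_const (a := (1 : ℝ≥0∞)))

theorem measurable_setLAverage_ball (s : ℝ) {g : X → ℝ≥0∞} (hg : Measurable g) :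
    Measurable fun y => ⨍⁻ z in ball y s, g z ∂μ := by
  simp only [setLAverage_eq]
  exact (measurable_setLIntegral_ball s hg).div (measurable_measure_ball s)

theorem lintegral_mul_setLIntegral_ball_comm (s : ℝ) {f g : X → ℝ≥0∞} (hf : Measurable f)
    (hg : Measurable g) :
    ∫⁻ y, f y * ∫⁻ z in ball y s, g z ∂μ ∂μ = ∫⁻ z, g z * ∫⁻ y in ball z s, f y ∂μ ∂μ := by
  have hmeas : Measurable ({w : X × X | dist w.2 w.1 < s}.indicator fun w => f w.1 * g w.2) :=
    ((hf.comp measurable_fst).mul (hg.comp measurable_snd)).indicator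
      (measurableSet_setOf_dist_lt s)
  calc ∫⁻ y, f y * ∫⁻ z in ball y s, g z ∂μ ∂μ
      = ∫⁻ y, ∫⁻ z, {w : X × X | dist w.2 w.1 < s}.indicator (fun w => f w.1 * g w.2) (y, z)
          ∂μ ∂μ := by
        refine lintegral_congr fun y => ?_
        rw [← lintegral_const_mul _ hg, ← lintegral_indicator measurableSet_ball]
        rfl
    _ = ∫⁻ z, ∫⁻ y, {w : X × X | dist w.2 w.1 < s}.indicator (fun w => f w.1 * g w.2) (y, z)
          ∂μ ∂μ := lintegral_lintegral_swap hmeas.aemeasurable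
    _ = ∫⁻ z, g z * ∫⁻ y in ball z s, f y ∂μ ∂μ := by
        refine lintegral_congr fun z => ?_
        rw [← lintegral_const_mul _ hf, ← lintegral_indicator measurableSet_ball]
        refine lintegral_congr fun y => ?_
        simp only [indicator, mem_ofPred_eq, mem_ball', mul_comm (f y)]

end Fubini

variable {X : Type u} [PseudoMetricSpace X] [MeasurableSpace X] {μ : Measure X} {Cd : ℝ≥0}

namespace IsDoublingWith

theorem setLAverage_ball_le (h : IsDoublingWith μ Cd) (g : X → ℝ≥0∞) {x y : X} {s : ℝ}
    (hs : 0 < s) (hy : y ∈ ball x (2 * s)) (k : ℕ) :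
    ⨍⁻ z in ball y (s / 2 ^ k), g z ∂μ ≤
      (Cd : ℝ≥0∞) ^ (k + 3) * ⨍⁻ z in ball x (3 * s), g z ∂μ := by
  have hsk : s / 2 ^ k ≤ s := div_le_self hs.le (one_le_pow₀ one_le_two)
  have hscale : (2 : ℝ) ^ (k + 3) * (s / 2 ^ k) = 8 * s := by
    rw [pow_add]
    field_simp
    norm_num
  refine setLAverage_le_mul_setLAverage (ball_subset_ball' ?_) (h.measure_ball_lt_top x _).ne
    (h.measure_ball_le (by positivity) (k + 3) ?_) g
  · linarith [mem_ball.1 hy]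
  · linarith [mem_ball'.1 hy]

variable [BorelSpace X]

theorem setLIntegral_inv_measure_ball_le (h : IsDoublingWith μ Cd) (z : X) {s : ℝ} (hs : 0 < s) :
    ∫⁻ y in ball z s, (μ (ball y s))⁻¹ ∂μ ≤ Cd := by
  have hz := (h.measure_ball_pos z hs).ne'
  have hz_top := (h.measure_ball_lt_top z s).ne
  calc ∫⁻ y in ball z s, (μ (ball y s))⁻¹ ∂μ
      ≤ ∫⁻ _ in ball z s, Cd * (μ (ball z s))⁻¹ ∂μ := by
        refine setLIntegral_mono' measurableSet_ball fun y hy => ?_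
        rw [← div_eq_mul_inv, ENNReal.le_div_iff_mul_le (Or.inl hz) (Or.inl hz_top),
          ← ENNReal.div_eq_inv_mul]
        refine ENNReal.div_le_of_le_mul ?_
        simpa only [pow_one] using h.measure_ball_le hs 1 (by linarith [mem_ball'.1 hy])
    _ = Cd := by rw [setLIntegral_const, mul_assoc, ENNReal.inv_mul_cancel hz hz_top, mul_one]

theorem lintegral_setLAverage_ball_le (h : IsDoublingWith μ Cd) {g : X → ℝ≥0∞}
    (hg : Measurable g) {s : ℝ} (hs : 0 < s) :
    ∫⁻ y, ⨍⁻ z in ball y s, g z ∂μ ∂μ ≤ Cd * ∫⁻ z, g z ∂μ := by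
  have := h.sigmaFinite
  have := h.secondCountableTopology
  calc ∫⁻ y, ⨍⁻ z in ball y s, g z ∂μ ∂μ
      = ∫⁻ y, (μ (ball y s))⁻¹ * ∫⁻ z in ball y s, g z ∂μ ∂μ := by
        simp only [setLAverage_eq, ENNReal.div_eq_inv_mul]
    _ = ∫⁻ z, g z * ∫⁻ y in ball z s, (μ (ball y s))⁻¹ ∂μ ∂μ :=
        lintegral_mul_setLIntegral_ball_comm s (measurable_measure_ball s).inv hg
    _ ≤ ∫⁻ z, g z * Cd ∂μ :=
        lintegral_mono fun z => by gcongr; exact h.setLIntegral_inv_measure_ball_le z hs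
    _ = Cd * ∫⁻ z, g z ∂μ := by rw [lintegral_mul_const _ hg, mul_comm]

theorem setLIntegral_setLAverage_ball_le (h : IsDoublingWith μ Cd) {g : X → ℝ≥0∞}
    (hg : Measurable g) (x : X) (r : ℝ) {s : ℝ} (hs : 0 < s) :
    ∫⁻ y in ball x r, ⨍⁻ z in ball y s, g z ∂μ ∂μ ≤ Cd * ∫⁻ z in ball x (r + s), g z ∂μ := by
  set G := (ball x (r + s)).indicator g with hG
  have heq : ∀ y ∈ ball x r, ⨍⁻ z in ball y s, g z ∂μ = ⨍⁻ z in ball y s, G z ∂μ := by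
    refine fun y hy => setLAverage_congr_fun measurableSet_ball fun z hz => ?_
    exact (indicator_of_mem (ball_subset_ball' (by linarith [mem_ball.1 hy]) hz) g).symm
  calc ∫⁻ y in ball x r, ⨍⁻ z in ball y s, g z ∂μ ∂μ
      = ∫⁻ y in ball x r, ⨍⁻ z in ball y s, G z ∂μ ∂μ :=
        setLIntegral_congr_fun measurableSet_ball heq
    _ ≤ ∫⁻ y, ⨍⁻ z in ball y s, G z ∂μ ∂μ := setLIntegral_le_lintegral _ _
    _ ≤ Cd * ∫⁻ z, G z ∂μ := h.lintegral_setLAverage_ball_le (hg.indicator measurableSet_ball) hs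
    _ = Cd * ∫⁻ z in ball x (r + s), g z ∂μ := by
        rw [hG, lintegral_indicator measurableSet_ball]

theorem setLAverage_setLAverage_ball_le (h : IsDoublingWith μ Cd) {g : X → ℝ≥0∞}
    (hg : Measurable g) (x : X) {s t : ℝ} (hs : 0 < s) (ht : 0 < t) (hts : t ≤ s) :
    ⨍⁻ y in ball x (2 * s), ⨍⁻ z in ball y t, g z ∂μ ∂μ ≤
      (Cd : ℝ≥0∞) ^ 2 * ⨍⁻ z in ball x (3 * s), g z ∂μ := by
  rw [setLAverage_eq]
  refine ENNReal.div_le_of_le_mul ?_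
  calc ∫⁻ y in ball x (2 * s), ⨍⁻ z in ball y t, g z ∂μ ∂μ
      ≤ Cd * ∫⁻ z in ball x (2 * s + t), g z ∂μ :=
        h.setLIntegral_setLAverage_ball_le hg x (2 * s) ht
    _ ≤ Cd * ∫⁻ z in ball x (3 * s), g z ∂μ := by
        gcongr
        linarith
    _ = Cd * (μ (ball x (3 * s)) * ⨍⁻ z in ball x (3 * s), g z ∂μ) := by
        rw [measure_mul_setLAverage _ (h.measure_ball_lt_top x _).ne]
    _ ≤ Cd * ((Cd : ℝ≥0∞) ^ 1 * μ (ball x (2 * s)) * ⨍⁻ z in ball x (3 * s), g z ∂μ) := by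
        gcongr
        exact h.measure_ball_le (by positivity) 1 (by rw [dist_self]; linarith)
    _ = (Cd : ℝ≥0∞) ^ 2 * (⨍⁻ z in ball x (3 * s), g z ∂μ) * μ (ball x (2 * s)) := by ring

theorem eLpNorm_setLAverage_ball_le (h : IsDoublingWith μ Cd) {p : ℝ≥0∞} (hp : 1 ≤ p)
    (hp_top : p ≠ ⊤) {g : X → ℝ≥0∞} (hg : Measurable g) (x : X) {s : ℝ} (hs : 0 < s) (k : ℕ) :
    eLpNorm (fun y => ⨍⁻ z in ball y (s / 2 ^ k), g z ∂μ) p μ[|ball x (2 * s)] ≤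
      ((Cd : ℝ≥0∞) ^ (1 - p.toReal⁻¹)) ^ k *
        ((Cd : ℝ≥0∞) ^ 3 * ⨍⁻ z in ball x (3 * s), g z ∂μ) := by
  have := h.sigmaFinite
  have := h.secondCountableTopology
  set a := ⨍⁻ z in ball x (3 * s), g z ∂μ
  have hinv : p.toReal⁻¹ ≤ 1 := inv_le_one_of_one_le₀ (by simpa using ENNReal.toReal_mono hp_top hp)
  have hsup : ∀ᵐ y ∂μ[|ball x (2 * s)],
      ⨍⁻ z in ball y (s / 2 ^ k), g z ∂μ ≤ (Cd : ℝ≥0∞) ^ k * ((Cd : ℝ≥0∞) ^ 3 * a) := by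
    filter_upwards [ProbabilityTheory.ae_cond_mem measurableSet_ball] with y hy
    rw [← mul_assoc, ← pow_add]
    exact h.setLAverage_ball_le g hs hy k
  have hL1 : ∫⁻ y, ⨍⁻ z in ball y (s / 2 ^ k), g z ∂μ ∂μ[|ball x (2 * s)] ≤
      (Cd : ℝ≥0∞) ^ 3 * a :=
    calc ∫⁻ y, ⨍⁻ z in ball y (s / 2 ^ k), g z ∂μ ∂μ[|ball x (2 * s)]
        = ⨍⁻ y in ball x (2 * s), ⨍⁻ z in ball y (s / 2 ^ k), g z ∂μ ∂μ :=
          (setLAverage_eq' ..).symm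
      _ ≤ (Cd : ℝ≥0∞) ^ 2 * a := h.setLAverage_setLAverage_ball_le hg x hs (by positivity)
          (div_le_self hs.le (one_le_pow₀ one_le_two))
      _ ≤ (Cd : ℝ≥0∞) ^ 3 * a := by
          gcongr
          exacts [h.one_le_of_point x, by norm_num]
  calc eLpNorm (fun y => ⨍⁻ z in ball y (s / 2 ^ k), g z ∂μ) p μ[|ball x (2 * s)]
      ≤ ((Cd : ℝ≥0∞) ^ k * ((Cd : ℝ≥0∞) ^ 3 * a)) ^ (1 - p.toReal⁻¹) *
          ((Cd : ℝ≥0∞) ^ 3 * a) ^ p.toReal⁻¹ := by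
        refine (eLpNorm_le_rpow_mul_lintegral_rpow hp hp_top
          (measurable_setLAverage_ball _ hg).aemeasurable hsup).trans ?_
        gcongr
    _ = ((Cd : ℝ≥0∞) ^ (1 - p.toReal⁻¹)) ^ k *
          (((Cd : ℝ≥0∞) ^ 3 * a) ^ (1 - p.toReal⁻¹) * ((Cd : ℝ≥0∞) ^ 3 * a) ^ p.toReal⁻¹) := by
        rw [ENNReal.mul_rpow_of_nonneg _ _ (sub_nonneg.2 hinv), mul_assoc,
          ← ENNReal.rpow_natCast_mul, ← ENNReal.rpow_mul_natCast, mul_comm (k : ℝ)]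
    _ = ((Cd : ℝ≥0∞) ^ (1 - p.toReal⁻¹)) ^ k * ((Cd : ℝ≥0∞) ^ 3 * a) := by
        rw [← ENNReal.rpow_add_of_nonneg _ _ (sub_nonneg.2 hinv) (by positivity), sub_add_cancel,
          ENNReal.rpow_one]

theorem eLpNorm_tsum_setLAverage_ball_le (h : IsDoublingWith μ Cd) {p : ℝ≥0∞} (hp : 1 ≤ p)
    (hp_top : p ≠ ⊤) (hCd : (Cd : ℝ≥0∞) ^ (1 - p.toReal⁻¹) ≤ 3 / 2) {g : X → ℝ≥0∞}
    (hg : Measurable g) (x : X) {s : ℝ} (hs : 0 < s) :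
    eLpNorm (fun y => ∑' k : ℕ, 2⁻¹ ^ k * ⨍⁻ z in ball y (s / 2 ^ k), g z ∂μ) p
        μ[|ball x (2 * s)] ≤
      4 * ((Cd : ℝ≥0∞) ^ 3 * ⨍⁻ z in ball x (3 * s), g z ∂μ) := by
  have := h.secondCountableTopology
  have := h.sigmaFinite
  have hratio : (2⁻¹ * (3 / 2) : ℝ≥0∞) = 3 / 4 := by
    rw [← ENNReal.toReal_eq_toReal_iff' (by finiteness) (by finiteness)]
    norm_num [ENNReal.toReal_div]
  have hgeom : ∑' k : ℕ, (3 / 4 : ℝ≥0∞) ^ k = 4 := by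
    rw [ENNReal.tsum_geometric, ENNReal.sub_eq_of_eq_add (c := 4⁻¹) (by finiteness), inv_inv]
    rw [← ENNReal.toReal_eq_toReal_iff' (by finiteness) (by finiteness),
      ENNReal.toReal_add (by finiteness) (by finiteness)]
    norm_num [ENNReal.toReal_div]
  calc eLpNorm (fun y => ∑' k : ℕ, 2⁻¹ ^ k * ⨍⁻ z in ball y (s / 2 ^ k), g z ∂μ) p
        μ[|ball x (2 * s)]
      ≤ ∑' k : ℕ, eLpNorm (fun y => 2⁻¹ ^ k * ⨍⁻ z in ball y (s / 2 ^ k), g z ∂μ) p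
          μ[|ball x (2 * s)] :=
        eLpNorm_tsum_le (fun k =>
          ((measurable_setLAverage_ball _ hg).const_mul _).aemeasurable) hp hp_top
    _ ≤ ∑' k : ℕ, 2⁻¹ ^ k *
          ((3 / 2) ^ k * ((Cd : ℝ≥0∞) ^ 3 * ⨍⁻ z in ball x (3 * s), g z ∂μ)) := by
        gcongr with k
        refine (eLpNorm_const_mul_le (by finiteness) _).trans ?_
        gcongr
        exact (h.eLpNorm_setLAverage_ball_le hp hp_top hg x hs k).trans (by gcongr)
    _ = (∑' k : ℕ, (3 / 4) ^ k) * ((Cd : ℝ≥0∞) ^ 3 * ⨍⁻ z in ball x (3 * s), g z ∂μ) := by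
        rw [← ENNReal.tsum_mul_right]
        simp only [← mul_assoc, ← mul_pow, hratio]
    _ = 4 * ((Cd : ℝ≥0∞) ^ 3 * ⨍⁻ z in ball x (3 * s), g z ∂μ) := by rw [hgeom]

end IsDoublingWith

end AveragingOperator

section LowerLipschitzConstant

variable {X : Type u} [PseudoMetricSpace X]

/-- The difference quotient `r⁻¹ sup_{y ∈ B(x,r)} |u y − u x|` of `u` at scale `r`, whose lower
limit as `r → 0` is `lipConst u x`. -/
def lipQuotient (u : X → ℝ) (x : X) (r : ℝ) : ℝ≥0∞ :=
  ⨆ y ∈ ball x r, ENNReal.ofReal (|u y - u x| / r)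

theorem ofReal_div_le_lipQuotient (v : X → ℝ) {x y : X} {r : ℝ} (hy : y ∈ ball x r) :
    ENNReal.ofReal (|v y - v x| / r) ≤ lipQuotient v x r :=
  le_iSup₂_of_le y hy le_rfl

theorem lipQuotient_congr {u v : X → ℝ} {x : X} {r : ℝ} (huv : EqOn u v (ball x r)) :
    lipQuotient u x r = lipQuotient v x r :=
  iSup_congr fun y => iSup_congr fun hy => by
    rw [huv hy, huv (mem_ball_self (pos_of_mem_ball hy))]

theorem lipConst_congr {u v : X → ℝ} {x : X} {r : ℝ} (hr : 0 < r) (huv : EqOn u v (ball x r)) :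
    lipConst u x = lipConst v x := by
  refine liminf_congr ?_
  filter_upwards [Ioo_mem_nhdsGT hr] with s hs
  exact lipQuotient_congr (huv.mono (ball_subset_ball hs.2.le))

theorem lipQuotient_le {v : X → ℝ} {K : ℝ≥0} (hv : LipschitzWith K v) (x : X) (r : ℝ) :
    lipQuotient v x r ≤ K := by
  refine iSup₂_le fun y hy => ENNReal.ofReal_le_of_le_toReal ?_
  rw [ENNReal.coe_toReal, div_le_iff₀ (pos_of_mem_ball hy)]
  calc |v y - v x| = dist (v y) (v x) := rfl
    _ ≤ K * dist y x := hv.dist_le_mul y x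
    _ ≤ K * r := by gcongr; exact (mem_ball.1 hy).le

theorem lipConst_le {v : X → ℝ} {K : ℝ≥0} (hv : LipschitzWith K v) (x : X) : lipConst v x ≤ K :=
  calc lipConst v x ≤ liminf (fun _ : ℝ => (K : ℝ≥0∞)) (𝓝[>] (0 : ℝ)) :=
        liminf_le_liminf (Eventually.of_forall (lipQuotient_le hv x))
    _ = K := liminf_const _

theorem lowerSemicontinuous_lipQuotient {v : X → ℝ} (hv : Continuous v) (r : ℝ) :
    LowerSemicontinuous fun x => lipQuotient v x r := by
  intro x a ha
  obtain ⟨y, hyx, hay⟩ : ∃ y ∈ ball x r, a < ENNReal.ofReal (|v y - v x| / r) := by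
    simpa only [lipQuotient, lt_iSup_iff, exists_prop] using ha
  have hcont : Continuous fun z => ENNReal.ofReal (|v y - v z| / r) :=
    ENNReal.continuous_ofReal.comp (by fun_prop)
  filter_upwards [hcont.continuousAt.eventually (lt_mem_nhds hay),
    isOpen_ball.mem_nhds (mem_ball_comm.1 hyx)] with z hz hzy
  exact hz.trans_le (ofReal_div_le_lipQuotient v (mem_ball_comm.1 hzy))

theorem lipQuotient_le_ofReal_div_mul (v : X → ℝ) (x : X) {q r : ℝ} (hq : 0 < q) (hqr : q ≤ r) :
    lipQuotient v x q ≤ ENNReal.ofReal (r / q) * lipQuotient v x r := by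
  have hr := hq.trans_le hqr
  refine iSup₂_le fun y hy => ?_
  calc ENNReal.ofReal (|v y - v x| / q)
      = ENNReal.ofReal (r / q) * ENNReal.ofReal (|v y - v x| / r) := by
        rw [← ENNReal.ofReal_mul (by positivity)]
        congr 1
        field_simp
    _ ≤ ENNReal.ofReal (r / q) * lipQuotient v x r := by
        gcongr
        exact ofReal_div_le_lipQuotient v (ball_subset_ball hqr hy)

theorem le_lipQuotient_of_forall_rat {v : X → ℝ} {x : X} {r : ℝ} (hr : 0 < r) {c : ℝ≥0∞}
    (h : ∀ q : ℚ, 0 < (q : ℝ) → (q : ℝ) < r → c ≤ lipQuotient v x q) : c ≤ lipQuotient v x r := by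
  have hlim : Tendsto (fun q : ℝ => ENNReal.ofReal (r / q) * lipQuotient v x r) (𝓝 r)
      (𝓝 (lipQuotient v x r)) := by
    have : Tendsto (fun q : ℝ => ENNReal.ofReal (r / q)) (𝓝 r) (𝓝 1) := by
      rw [← ENNReal.ofReal_one, ← div_self hr.ne']
      exact (ENNReal.continuous_ofReal.tendsto _).comp
        (tendsto_const_nhds.div tendsto_id hr.ne')
    simpa only [one_mul] using ENNReal.Tendsto.mul_const this (Or.inl one_ne_zero)
  refine ge_of_tendsto_of_frequently hlim (frequently_iff.2 fun {U} hU => ?_)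
  obtain ⟨l, hl, hlU⟩ := exists_Ioc_subset_of_mem_nhds hU ⟨0, hr⟩
  obtain ⟨q, hlq, hqr⟩ := exists_rat_btwn (max_lt hl hr)
  have hq : 0 < (q : ℝ) := (le_max_right l 0).trans_lt hlq
  exact ⟨q, hlU ⟨(le_max_left l 0).trans_lt hlq, hqr.le⟩,
    (h q hq hqr).trans (lipQuotient_le_ofReal_div_mul v x hq hqr.le)⟩

theorem lipConst_eq_liminf_rat (v : X → ℝ) (x : X) :
    lipConst v x =
      liminf (fun q : ℚ => lipQuotient v x q) (comap ((↑) : ℚ → ℝ) (𝓝[>] (0 : ℝ))) := by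
  refine le_antisymm (liminf_le_liminf_of_le map_comap_le) (le_of_forall_lt fun c hc => ?_)
  obtain ⟨b, hcb, hb⟩ := exists_between hc
  obtain ⟨U, hU, hUb⟩ := mem_comap.1 (eventually_lt_of_lt_liminf hb)
  obtain ⟨ε, hε, hεU⟩ := mem_nhdsGT_iff_exists_Ioo_subset.1 hU
  refine hcb.trans_le (le_liminf_of_le (by isBoundedDefault) ?_)
  filter_upwards [Ioo_mem_nhdsGT hε] with r hr
  exact le_lipQuotient_of_forall_rat hr.1 fun q hq hqr =>
    (hUb (hεU ⟨hq, hqr.trans hr.2⟩ : q ∈ ((↑) : ℚ → ℝ) ⁻¹' U)).le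

theorem measurable_lipConst [MeasurableSpace X] [OpensMeasurableSpace X] {v : X → ℝ}
    (hv : Continuous v) : Measurable (lipConst v) := by
  obtain ⟨s, hs⟩ := (comap ((↑) : ℚ → ℝ) (𝓝[>] (0 : ℝ))).exists_antitone_basis
  rw [funext (lipConst_eq_liminf_rat v)]
  exact Measurable.liminf' (fun q => (lowerSemicontinuous_lipQuotient hv q).measurable)
    ⟨hs.toHasBasis, to_countable _⟩ fun n => to_countable _

theorem ofReal_abs_deriv_le_lipConst {v : X → ℝ} (hv : Continuous v) {γ : ℝ → X} {a b t : ℝ}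
    (hγ : LipschitzOnWith 1 γ (Icc a b)) (ht : t ∈ Ioo a b) (hd : DifferentiableAt ℝ (v ∘ γ) t) :
    ENNReal.ofReal |deriv (v ∘ γ) t| ≤ lipConst v (γ t) := by
  have hslope : Tendsto (fun r => ENNReal.ofReal (|v (γ (t + r)) - v (γ t)| / r)) (𝓝[>] 0)
      (𝓝 (ENNReal.ofReal |deriv (v ∘ γ) t|)) := by
    refine (ENNReal.tendsto_ofReal hd.hasDerivAt.tendsto_slope_zero_right.abs).congr' ?_
    filter_upwards [self_mem_nhdsWithin] with r (hr : 0 < r)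
    rw [smul_eq_mul, abs_mul, abs_inv, abs_of_pos hr, inv_mul_eq_div]
    rfl
  rw [← hslope.liminf_eq]
  refine liminf_le_liminf ?_
  filter_upwards [Ioo_mem_nhdsGT (sub_pos.2 ht.2)] with r hr
  have hcont : ContinuousWithinAt (fun s => ENNReal.ofReal (|v (γ (t + s)) - v (γ t)| / r))
      (Ioo 0 r) r := by
    have hγr : ContinuousAt γ (t + r) :=
      hγ.continuousOn.continuousAt (Icc_mem_nhds (by linarith [ht.1, hr.1]) (by linarith [hr.2]))
    have hvγ : ContinuousAt (fun s => v (γ (t + s))) r :=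
      hv.continuousAt.comp (hγr.comp (continuous_const_add t).continuousAt)
    exact (ENNReal.continuous_ofReal.continuousAt.comp
      ((hvγ.sub continuousAt_const).abs.div_const r)).continuousWithinAt
  have := right_nhdsWithin_Ioo_neBot hr.1
  refine le_of_tendsto hcont ?_
  filter_upwards [self_mem_nhdsWithin] with s hs
  refine ofReal_div_le_lipQuotient v (mem_ball.2 ?_)
  calc dist (γ (t + s)) (γ t) ≤ dist (t + s) t := by
        simpa using hγ.dist_le_mul (t + s) ⟨by linarith [ht.1, hs.1], by linarith [hs.2, hr.2]⟩ t
          (Ioo_subset_Icc_self ht)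
    _ = s := by rw [dist_self_add_left, Real.norm_of_nonneg hs.1.le]
    _ < r := hs.2

theorem intervalIntegrable_lipConst_comp [MeasurableSpace X] [BorelSpace X] {v : X → ℝ} {K : ℝ≥0}
    (hv : LipschitzWith K v) {γ : ℝ → X} {a b : ℝ} (hab : a ≤ b)
    (hγ : ContinuousOn γ (Icc a b)) :
    IntervalIntegrable (fun t => (lipConst v (γ t)).toReal) volume a b := by
  rw [intervalIntegrable_iff_integrableOn_Icc_of_le hab]
  refine Integrable.of_bound (C := K) ?_ (ae_of_all _ fun t => ?_)
  · exact ((measurable_lipConst hv.continuous).ennreal_toReal.comp_aemeasurable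
      (hγ.aemeasurable measurableSet_Icc)).aestronglyMeasurable
  · rw [Real.norm_of_nonneg ENNReal.toReal_nonneg]
    exact ENNReal.toReal_le_coe_of_le_coe (lipConst_le hv _)

theorem isUpperGradientOf_lipConst [MeasurableSpace X] [BorelSpace X] {v : X → ℝ} {K : ℝ≥0}
    (hv : LipschitzWith K v) : IsUpperGradientOf (fun x => (lipConst v x).toReal) v := by
  intro L hL γ hγ
  have hac : AbsolutelyContinuousOnInterval (v ∘ γ) 0 L := by
    refine LipschitzOnWith.absolutelyContinuousOnInterval (K := K * 1) ?_
    rw [uIcc_of_le hL]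
    exact hv.comp_lipschitzOnWith hγ
  have hderiv : ∀ᵐ t, t ∈ Ioo 0 L → |deriv (v ∘ γ) t| ≤ (lipConst v (γ t)).toReal := by
    filter_upwards [hac.ae_differentiableAt] with t hdiff ht
    refine (ENNReal.ofReal_le_iff_le_toReal ((lipConst_le hv _).trans_lt ENNReal.coe_lt_top).ne).1
      (ofReal_abs_deriv_le_lipConst hv.continuous hγ ht (hdiff ?_))
    exact uIcc_of_le hL ▸ Ioo_subset_Icc_self ht
  have hint := intervalIntegrable_lipConst_comp hv hL hγ.continuousOn
  calc |v (γ 0) - v (γ L)| = |∫ t in (0 : ℝ)..L, deriv (v ∘ γ) t| := by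
        rw [hac.integral_deriv_eq_sub, abs_sub_comm]
        rfl
    _ ≤ ∫ t in (0 : ℝ)..L, |deriv (v ∘ γ) t| := intervalIntegral.abs_integral_le_integral_abs hL
    _ ≤ ∫ t in (0 : ℝ)..L, (lipConst v (γ t)).toReal := by
        simp only [intervalIntegral.integral_of_le hL, integral_Ioc_eq_integral_Ioo]
        exact setIntegral_mono_on_ae
          (hac.intervalIntegrable_deriv.abs.1.mono_set Ioo_subset_Ioc_self)
          (hint.1.mono_set Ioo_subset_Ioc_self) measurableSet_Ioo hderiv

theorem LocallyLipschitzOnSet.exists_lipschitzWith_eqOn {f : X → ℝ} {W : Set X}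
    (hf : LocallyLipschitzOnSet f W) {x : X} {s : ℝ} (hs : closedBall x s ⊆ W) :
    ∃ (L : ℝ≥0) (v : X → ℝ), LipschitzWith L v ∧ EqOn f v (closedBall x s) := by
  obtain ⟨L, hL⟩ := hf _ isClosed_closedBall isBounded_closedBall hs
  obtain ⟨v, hv, hfv⟩ := hL.extend_real
  exact ⟨L, v, hv, hfv⟩

end LowerLipschitzConstant

section LebesguePoint

variable {X : Type u} [MetricSpace X] [MeasurableSpace X] {μ : Measure X} {Cd : ℝ≥0}

theorem LebesguePointOf.of_continuousAt [OpensMeasurableSpace X] (h : IsDoublingWith μ Cd)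
    {v : X → ℝ} {x : X} (hv : ContinuousAt v x) : LebesguePointOf μ v x := by
  refine Metric.tendsto_nhds.2 fun ε hε => ?_
  obtain ⟨δ, hδ, hδv⟩ := Metric.continuousAt_iff.1 hv (ε / 2) (half_pos hε)
  filter_upwards [Ioo_mem_nhdsGT hδ] with r hr
  have := h.isProbabilityMeasure_cond_ball x hr.1
  rw [dist_zero_right, setAverage_eq']
  refine (norm_integral_le_of_norm_le_const (μ := μ[|ball x r]) (C := ε / 2) ?_).trans_lt ?_
  · filter_upwards [ProbabilityTheory.ae_cond_mem measurableSet_ball] with y hy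
    simpa [Real.dist_eq] using (hδv ((mem_ball.1 hy).trans hr.2)).le
  · rw [probReal_univ, mul_one]
    exact half_lt_self hε

theorem LebesguePointOf.tendsto_setAverage (h : IsDoublingWith μ Cd) {u : X → ℝ} {x : X}
    (hx : LebesguePointOf μ u x) {s : ℝ} (hs : 0 < s) (hu : IntegrableOn u (ball x s) μ) :
    Tendsto (fun r => ⨍ y in ball x r, u y ∂μ) (𝓝[>] (0 : ℝ)) (𝓝 (u x)) := by
  have hx' := ENNReal.tendsto_ofReal hx
  rw [ENNReal.ofReal_zero] at hx'
  refine tendsto_iff_edist_tendsto_0.2 (tendsto_of_tendsto_of_tendsto_of_le_of_le'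
    tendsto_const_nhds hx' (Eventually.of_forall fun _ => zero_le) ?_)
  filter_upwards [Ioo_mem_nhdsGT hs] with r hr
  have := h.isProbabilityMeasure_cond_ball x hr.1
  have hint : Integrable u μ[|ball x r] := (hu.mono_set (ball_subset_ball hr.2.le)).smul_measure
    (ENNReal.inv_ne_top.2 (h.measure_ball_pos x hr.1).ne')
  rw [edist_eq_enorm_sub, setAverage_eq', setAverage_eq']
  exact (enorm_integral_sub_le_lintegral_enorm_sub hint (u x)).trans_eq
    (ofReal_integral_norm_eq_lintegral_enorm (hint.sub (integrable_const (u x)))).symm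

theorem LebesguePointOf.enorm_setAverage_sub_le_tsum (h : IsDoublingWith μ Cd) {u : X → ℝ}
    {x : X} (hx : LebesguePointOf μ u x) {s : ℝ} (hs : 0 < s) (hu : IntegrableOn u (ball x s) μ) :
    ‖(⨍ y in ball x s, u y ∂μ) - u x‖ₑ ≤
      Cd * ∑' k : ℕ, ⨍⁻ y in ball x (s / 2 ^ k), ‖u y - ⨍ z in ball x (s / 2 ^ k), u z ∂μ‖ₑ ∂μ := by
  have hpos : ∀ k : ℕ, 0 < s / 2 ^ k := fun k => by positivity
  have hstep : ∀ k : ℕ,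
      edist (⨍ y in ball x (s / 2 ^ k), u y ∂μ) (⨍ y in ball x (s / 2 ^ (k + 1)), u y ∂μ) ≤
        Cd * ⨍⁻ y in ball x (s / 2 ^ k), ‖u y - ⨍ z in ball x (s / 2 ^ k), u z ∂μ‖ₑ ∂μ := by
    intro k
    have hhalf : s / 2 ^ k = 2 * (s / 2 ^ (k + 1)) := by
      rw [pow_succ]
      field_simp
    have hsub : ball x (s / 2 ^ (k + 1)) ⊆ ball x (s / 2 ^ k) :=
      ball_subset_ball (by linarith [hpos (k + 1)])
    have hsub0 : ball x (s / 2 ^ k) ⊆ ball x s :=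
      ball_subset_ball (div_le_self hs.le (one_le_pow₀ one_le_two))
    rw [edist_comm, edist_eq_enorm_sub]
    refine (enorm_setAverage_sub_le_setLAverage (h.measure_ball_pos x (hpos (k + 1))).ne'
      (h.measure_ball_lt_top x _).ne (hu.mono_set (hsub.trans hsub0)) _).trans
      (setLAverage_le_mul_setLAverage hsub (h.measure_ball_lt_top x _).ne ?_ _)
    rw [hhalf]
    exact (h x _ (hpos (k + 1))).2.1
  have hlim : Tendsto (fun k : ℕ => s / 2 ^ k) atTop (𝓝[>] 0) :=
    tendsto_nhdsWithin_iff.2 ⟨tendsto_const_nhds.div_atTop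
      (tendsto_pow_atTop_atTop_of_one_lt one_lt_two), Eventually.of_forall hpos⟩
  rw [← ENNReal.tsum_mul_left, ← edist_eq_enorm_sub]
  simpa only [pow_zero, div_one] using edist_le_tsum_of_edist_le_of_tendsto₀ _ hstep
    ((hx.tendsto_setAverage h hs hu).comp hlim)

end LebesguePoint

section SobolevPoincare

variable {X : Type u} [MetricSpace X] [MeasurableSpace X] [BorelSpace X] {μ : Measure X}
  {Cd : ℝ≥0} {CP : ℝ}

theorem integrableOn_ball_of_lipschitzWith {v : X → ℝ} {K : ℝ≥0} (hv : LipschitzWith K v) {x : X}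
    {r : ℝ} (hμ : μ (ball x r) < ⊤) : IntegrableOn v (ball x r) μ := by
  refine IntegrableOn.of_bound hμ hv.continuous.aestronglyMeasurable (‖v x‖ + K * r) ?_
  filter_upwards [ae_restrict_mem measurableSet_ball] with y hy
  calc ‖v y‖ ≤ ‖v x‖ + ‖v y - v x‖ := norm_le_norm_add_norm_sub' _ _
    _ ≤ ‖v x‖ + K * r := by
        rw [← dist_eq_norm]
        gcongr
        exact (hv.dist_le_mul y x).trans (by gcongr; exact (mem_ball.1 hy).le)

namespace SupportsPoincare

theorem setLAverage_enorm_sub_setAverage_le (hP : SupportsPoincare μ CP) (h : IsDoublingWith μ Cd)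
    {v : X → ℝ} {K : ℝ≥0} (hv : LipschitzWith K v) (x : X) {r : ℝ} (hr : 0 < r) :
    ⨍⁻ y in ball x r, ‖v y - ⨍ z in ball x r, v z ∂μ‖ₑ ∂μ ≤
      ENNReal.ofReal CP * ENNReal.ofReal r * ⨍⁻ y in ball x r, lipConst v y ∂μ := by
  have := h.isProbabilityMeasure_cond_ball x hr
  have hint : Integrable v μ[|ball x r] :=
    (integrableOn_ball_of_lipschitzWith hv (h.measure_ball_lt_top x r)).smul_measure
      (ENNReal.inv_ne_top.2 (h.measure_ball_pos x hr).ne')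
  have hlip := measurable_lipConst hv.continuous
  have hfin : ⨍⁻ y in ball x r, lipConst v y ∂μ ≠ ⊤ := by
    rw [setLAverage_eq']
    refine ((lintegral_mono (μ := μ[|ball x r]) (lipConst_le hv)).trans_lt ?_).ne
    rw [lintegral_const, measure_univ, mul_one]
    exact ENNReal.coe_lt_top
  have key := hP v (fun A _ _ _ => ⟨K, hv.lipschitzOnWith⟩) _ (fun _ => ENNReal.toReal_nonneg)
    hlip.ennreal_toReal (isUpperGradientOf_lipConst hv) x r hr
  rw [← toReal_setLAverage hlip.aemeasurable
    (ae_of_all _ fun y => ((lipConst_le hv y).trans_lt ENNReal.coe_lt_top).ne)] at key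
  calc ⨍⁻ y in ball x r, ‖v y - ⨍ z in ball x r, v z ∂μ‖ₑ ∂μ
      = ENNReal.ofReal (⨍ y in ball x r, |v y - ⨍ z in ball x r, v z ∂μ| ∂μ) := by
        rw [setLAverage_eq', setAverage_eq' _ fun y => |v y - ⨍ z in ball x r, v z ∂μ|]
        exact (ofReal_integral_norm_eq_lintegral_enorm (hint.sub (integrable_const _))).symm
    _ ≤ ENNReal.ofReal (CP * r * (⨍⁻ y in ball x r, lipConst v y ∂μ).toReal) :=
        ENNReal.ofReal_le_ofReal key
    _ = ENNReal.ofReal CP * ENNReal.ofReal r * ⨍⁻ y in ball x r, lipConst v y ∂μ := by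
        rw [ENNReal.ofReal_mul' ENNReal.toReal_nonneg, ENNReal.ofReal_mul' hr.le,
          ENNReal.ofReal_toReal hfin]

theorem enorm_setAverage_sub_setAverage_le (hP : SupportsPoincare μ CP) (h : IsDoublingWith μ Cd)
    {v : X → ℝ} {K : ℝ≥0} (hv : LipschitzWith K v) {x y : X} {s : ℝ} (hs : 0 < s)
    (hy : y ∈ ball x (2 * s)) :
    ‖(⨍ z in ball y s, v z ∂μ) - ⨍ z in ball x (3 * s), v z ∂μ‖ₑ ≤
      (Cd : ℝ≥0∞) ^ 3 * (ENNReal.ofReal CP * (3 * ENNReal.ofReal s) *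
        ⨍⁻ z in ball x (3 * s), lipConst v z ∂μ) := by
  have h3s := hP.setLAverage_enorm_sub_setAverage_le h hv x (r := 3 * s) (by positivity)
  rw [ENNReal.ofReal_mul zero_le_three, ENNReal.ofReal_ofNat] at h3s
  calc ‖(⨍ z in ball y s, v z ∂μ) - ⨍ z in ball x (3 * s), v z ∂μ‖ₑ
      ≤ ⨍⁻ z in ball y s, ‖v z - ⨍ w in ball x (3 * s), v w ∂μ‖ₑ ∂μ :=
        enorm_setAverage_sub_le_setLAverage (h.measure_ball_pos y hs).ne'
          (h.measure_ball_lt_top y s).ne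
          (integrableOn_ball_of_lipschitzWith hv (h.measure_ball_lt_top y s)) _
    _ ≤ (Cd : ℝ≥0∞) ^ 3 *
          ⨍⁻ z in ball x (3 * s), ‖v z - ⨍ w in ball x (3 * s), v w ∂μ‖ₑ ∂μ :=
        setLAverage_le_mul_setLAverage (ball_subset_ball' (by linarith [mem_ball.1 hy]))
          (h.measure_ball_lt_top x _).ne
          (h.measure_ball_le hs 3 (by linarith [mem_ball'.1 hy])) _
    _ ≤ (Cd : ℝ≥0∞) ^ 3 * (ENNReal.ofReal CP * (3 * ENNReal.ofReal s) *
          ⨍⁻ z in ball x (3 * s), lipConst v z ∂μ) := by gcongr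

theorem enorm_sub_setAverage_le (hP : SupportsPoincare μ CP) (h : IsDoublingWith μ Cd)
    {v : X → ℝ} {K : ℝ≥0} (hv : LipschitzWith K v) {x y : X} {s : ℝ} (hs : 0 < s)
    (hy : y ∈ ball x (2 * s)) :
    ‖v y - ⨍ z in ball x (3 * s), v z ∂μ‖ₑ ≤
      (Cd : ℝ≥0∞) ^ 3 * (ENNReal.ofReal CP * ENNReal.ofReal s) *
        (3 * (⨍⁻ z in ball x (3 * s), lipConst v z ∂μ) +
          ∑' k : ℕ, 2⁻¹ ^ k * ⨍⁻ z in ball y (s / 2 ^ k), lipConst v z ∂μ) := by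
  have hnear : ‖(⨍ z in ball y s, v z ∂μ) - v y‖ₑ ≤
      (Cd : ℝ≥0∞) ^ 3 * ∑' k : ℕ, ENNReal.ofReal CP * ENNReal.ofReal s *
        (2⁻¹ ^ k * ⨍⁻ z in ball y (s / 2 ^ k), lipConst v z ∂μ) := by
    have hleb : LebesguePointOf μ v y := .of_continuousAt h hv.continuous.continuousAt
    refine (hleb.enorm_setAverage_sub_le_tsum h hs
      (integrableOn_ball_of_lipschitzWith hv (h.measure_ball_lt_top y s))).trans ?_
    gcongr with k
    · exact le_self_pow (h.one_le_of_point x) three_ne_zero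
    · refine (hP.setLAverage_enorm_sub_setAverage_le h hv y (by positivity)).trans_eq ?_
      rw [ENNReal.ofReal_div_of_pos (by positivity), ENNReal.ofReal_pow zero_le_two,
        ENNReal.ofReal_ofNat, div_eq_mul_inv, ENNReal.inv_pow]
      ring
  rw [ENNReal.tsum_mul_left] at hnear
  calc ‖v y - ⨍ z in ball x (3 * s), v z ∂μ‖ₑ
      ≤ ‖(⨍ z in ball y s, v z ∂μ) - ⨍ z in ball x (3 * s), v z ∂μ‖ₑ +
          ‖(⨍ z in ball y s, v z ∂μ) - v y‖ₑ := by
        rw [← sub_sub_sub_cancel_left _ _ (⨍ z in ball y s, v z ∂μ)]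
        exact enorm_sub_le
    _ ≤ (Cd : ℝ≥0∞) ^ 3 * (ENNReal.ofReal CP * (3 * ENNReal.ofReal s) *
            ⨍⁻ z in ball x (3 * s), lipConst v z ∂μ) +
          (Cd : ℝ≥0∞) ^ 3 * (ENNReal.ofReal CP * ENNReal.ofReal s *
            ∑' k : ℕ, 2⁻¹ ^ k * ⨍⁻ z in ball y (s / 2 ^ k), lipConst v z ∂μ) :=
        add_le_add (hP.enorm_setAverage_sub_setAverage_le h hv hs hy) hnear
    _ = (Cd : ℝ≥0∞) ^ 3 * (ENNReal.ofReal CP * ENNReal.ofReal s) *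
        (3 * (⨍⁻ z in ball x (3 * s), lipConst v z ∂μ) +
          ∑' k : ℕ, 2⁻¹ ^ k * ⨍⁻ z in ball y (s / 2 ^ k), lipConst v z ∂μ) := by ring

theorem eLpNorm_sub_setAverage_le (hP : SupportsPoincare μ CP) (h : IsDoublingWith μ Cd)
    {p : ℝ≥0∞} (hp : 1 ≤ p) (hp_top : p ≠ ⊤) (hCd : (Cd : ℝ≥0∞) ^ (1 - p.toReal⁻¹) ≤ 3 / 2)
    {v : X → ℝ} {K : ℝ≥0} (hv : LipschitzWith K v) (x : X) {s : ℝ} (hs : 0 < s) :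
    eLpNorm (fun y => v y - ⨍ z in ball x (3 * s), v z ∂μ) p μ[|ball x (2 * s)] ≤
      7 * (Cd : ℝ≥0∞) ^ 6 * (ENNReal.ofReal CP * ENNReal.ofReal s) *
        ⨍⁻ z in ball x (3 * s), lipConst v z ∂μ := by
  have := h.isProbabilityMeasure_cond_ball x (mul_pos two_pos hs)
  have := h.secondCountableTopology
  have := h.sigmaFinite
  have hlip := measurable_lipConst hv.continuous
  set G := ⨍⁻ z in ball x (3 * s), lipConst v z ∂μ
  have hsum : Measurable fun y =>
      ∑' k : ℕ, (2⁻¹ : ℝ≥0∞) ^ k * ⨍⁻ z in ball y (s / 2 ^ k), lipConst v z ∂μ :=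
    Measurable.tsum fun k => (measurable_setLAverage_ball _ hlip).const_mul _
  calc eLpNorm (fun y => v y - ⨍ z in ball x (3 * s), v z ∂μ) p μ[|ball x (2 * s)]
      ≤ eLpNorm (fun y => (Cd : ℝ≥0∞) ^ 3 * (ENNReal.ofReal CP * ENNReal.ofReal s) *
          (3 * G + ∑' k : ℕ, 2⁻¹ ^ k * ⨍⁻ z in ball y (s / 2 ^ k), lipConst v z ∂μ))
          p μ[|ball x (2 * s)] := by
        refine eLpNorm_mono_enorm_ae ?_
        filter_upwards [ProbabilityTheory.ae_cond_mem measurableSet_ball] with y hy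
        exact hP.enorm_sub_setAverage_le h hv hs hy
    _ ≤ (Cd : ℝ≥0∞) ^ 3 * (ENNReal.ofReal CP * ENNReal.ofReal s) *
          (3 * G + 4 * ((Cd : ℝ≥0∞) ^ 3 * G)) := by
        refine (eLpNorm_const_mul_le (by finiteness) _).trans ?_
        gcongr
        refine (eLpNorm_add_le aestronglyMeasurable_const hsum.aestronglyMeasurable hp).trans ?_
        gcongr
        · rw [eLpNorm_const _ (one_pos.trans_le hp).ne' (IsProbabilityMeasure.ne_zero _)]
          simp
        · exact h.eLpNorm_tsum_setLAverage_ball_le hp hp_top hCd hlip x hs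
    _ ≤ (Cd : ℝ≥0∞) ^ 3 * (ENNReal.ofReal CP * ENNReal.ofReal s) *
          (3 * ((Cd : ℝ≥0∞) ^ 3 * G) + 4 * ((Cd : ℝ≥0∞) ^ 3 * G)) := by
        gcongr
        exact le_mul_of_one_le_left zero_le (one_le_pow₀ (h.one_le_of_point x))
    _ = 7 * (Cd : ℝ≥0∞) ^ 6 * (ENNReal.ofReal CP * ENNReal.ofReal s) * G := by ring

end SupportsPoincare

end SobolevPoincare

section TotalVariation

variable {X : Type u} [MetricSpace X] [MeasurableSpace X] [BorelSpace X] {μ : Measure X}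
  {u : X → ℝ} {x : X} {r R : ℝ}

theorem exists_seq_lipschitzWith_of_totVarOn_lt (hrR : r < R) {b : ℝ≥0∞}
    (hb : totVarOn μ u (ball x R) < b) :
    ∃ v : ℕ → X → ℝ, (∀ i, ∃ K, LipschitzWith K (v i)) ∧
      Tendsto (fun i => ∫⁻ y in ball x r, ‖v i y - u y‖ₑ ∂μ) atTop (𝓝 0) ∧
      ∀ i, ∫⁻ y in ball x r, lipConst (v i) y ∂μ ≤ b := by
  simp only [totVarOn, iInf_lt_iff] at hb
  obtain ⟨f, hf, hfu, hfb⟩ := hb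
  obtain ⟨φ, hφ, hφb⟩ := extraction_of_frequently_atTop
    (frequently_lt_of_liminf_lt (by isBoundedDefault) hfb)
  have hsub : closedBall x r ⊆ ball x R := closedBall_subset_ball hrR
  choose K v hv hfv using fun i => (hf (φ i)).exists_lipschitzWith_eqOn hsub
  refine ⟨v, fun i => ⟨K i, hv i⟩, ?_, fun i => ?_⟩
  · refine tendsto_of_tendsto_of_tendsto_of_le_of_le tendsto_const_nhds
      ((hfu _ isClosed_closedBall isBounded_closedBall hsub).comp hφ.tendsto_atTop)
      (fun _ => zero_le) fun i => ?_
    refine (setLIntegral_congr_fun measurableSet_ball fun y hy => ?_).trans_le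
      (lintegral_mono_set ball_subset_closedBall)
    rw [Real.enorm_eq_ofReal_abs, ← hfv i (ball_subset_closedBall hy)]
  · refine (setLIntegral_congr_fun measurableSet_ball fun y hy => ?_).trans_le
      ((lintegral_mono_set (ball_subset_closedBall.trans hsub)).trans (hφb i).le)
    obtain ⟨δ, hδ, hball⟩ := Metric.isOpen_iff.1 isOpen_ball y hy
    exact (lipConst_congr hδ fun z hz => hfv i (ball_subset_closedBall (hball hz))).symm

theorem integrableOn_ball_of_totVarOn_ne_top (hμ : μ (ball x r) < ⊤)
    (hu : AEStronglyMeasurable u (μ.restrict (ball x r))) (hrR : r < R)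
    (hV : totVarOn μ u (ball x R) ≠ ⊤) : IntegrableOn u (ball x r) μ := by
  obtain ⟨v, hv, hvu, -⟩ := exists_seq_lipschitzWith_of_totVarOn_lt hrR hV.lt_top
  obtain ⟨i, hi⟩ := (hvu.eventually (gt_mem_nhds zero_lt_one)).exists
  obtain ⟨K, hK⟩ := hv i
  have hvi := integrableOn_ball_of_lipschitzWith hK hμ
  have hdiff : IntegrableOn (v i - u) (ball x r) μ :=
    ⟨hvi.aestronglyMeasurable.sub hu, hi.trans ENNReal.one_lt_top⟩
  simpa only [sub_sub_cancel] using hvi.sub hdiff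

theorem eLpNorm_sub_setAverage_le_totVarOn (hμ0 : μ (ball x r) ≠ 0) (hμ : μ (ball x r) < ⊤)
    {ν : Measure X} (hν : ν ≪ μ.restrict (ball x r)) {p A : ℝ≥0∞} (hA : A ≠ ⊤)
    (hlip : ∀ (v : X → ℝ) (K : ℝ≥0), LipschitzWith K v →
      eLpNorm (fun y => v y - ⨍ z in ball x r, v z ∂μ) p ν ≤
        A * ⨍⁻ z in ball x r, lipConst v z ∂μ)
    (hu : AEStronglyMeasurable u (μ.restrict (ball x r))) (hrR : r < R)
    (hV : totVarOn μ u (ball x R) ≠ ⊤) :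
    eLpNorm (fun y => u y - ⨍ z in ball x r, u z ∂μ) p ν ≤
      A * (totVarOn μ u (ball x R) / μ (ball x r)) := by
  have hbound : ∀ b > totVarOn μ u (ball x R),
      eLpNorm (fun y => u y - ⨍ z in ball x r, u z ∂μ) p ν ≤ A * (b / μ (ball x r)) := by
    intro b hb
    obtain ⟨v, hv, hvu, hvb⟩ := exists_seq_lipschitzWith_of_totVarOn_lt hrR hb
    choose K hK using hv
    refine eLpNorm_sub_setAverage_le_of_tendsto hν
      (fun i => integrableOn_ball_of_lipschitzWith (hK i) hμ)
      (integrableOn_ball_of_totVarOn_ne_top hμ hu hrR hV) hvu fun i => (hlip _ _ (hK i)).trans ?_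
    rw [setLAverage_eq]
    gcongr
    exact hvb i
  have : (𝓝[>] totVarOn μ u (ball x R)).NeBot := nhdsGT_neBot_of_exists_gt ⟨⊤, hV.lt_top⟩
  have hlim : Tendsto (fun b => A * (b / μ (ball x r))) (𝓝[>] totVarOn μ u (ball x R))
      (𝓝 (A * (totVarOn μ u (ball x R) / μ (ball x r)))) :=
    (ENNReal.Tendsto.const_mul (ENNReal.Tendsto.div_const tendsto_id (Or.inr hμ0))
      (Or.inr hA)).mono_left nhdsWithin_le_nhds
  exact ge_of_tendsto hlim (eventually_mem_nhdsWithin.mono hbound)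

end TotalVariation

section MaximalVariation

variable {X : Type u} [MetricSpace X] [MeasurableSpace X] {μ : Measure X} {Cd : ℝ≥0} {CP : ℝ}
  {u : X → ℝ} {x : X}

/-- The maximal function at scale `R` of the variation of `u`, that is, the supremum of
`V(u, B(x,ρ)) / μ(B(x,ρ))` over the radii `0 < ρ ≤ R`. It is `restrMaximal` with the set function
`totVarOn μ u` in place of a measure. -/
def maximalVariation (μ : Measure X) (u : X → ℝ) (R : ℝ) (x : X) : ℝ≥0∞ :=
  ⨆ (ρ : ℝ) (_ : 0 < ρ) (_ : ρ ≤ R), totVarOn μ u (ball x ρ) / μ (ball x ρ)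

theorem IsDoublingWith.totVarOn_ball_le (h : IsDoublingWith μ Cd) {ρ R : ℝ} (hρ : 0 < ρ)
    (hρR : ρ ≤ R) : totVarOn μ u (ball x ρ) ≤ maximalVariation μ u R x * μ (ball x ρ) := by
  rw [← ENNReal.div_le_iff (h.measure_ball_pos x hρ).ne' (h.measure_ball_lt_top x ρ).ne]
  exact le_iSup_of_le ρ (le_iSup₂_of_le hρ hρR le_rfl)

theorem IsDoublingWith.totVarOn_ball_ne_top (h : IsDoublingWith μ Cd) {ρ R : ℝ} (hρ : 0 < ρ)
    (hρR : ρ ≤ R) (hM : maximalVariation μ u R x ≠ ⊤) : totVarOn μ u (ball x ρ) ≠ ⊤ :=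
  ((h.totVarOn_ball_le hρ hρR).trans_lt
    (ENNReal.mul_lt_top hM.lt_top (h.measure_ball_lt_top x ρ))).ne

theorem IsDoublingWith.totVarOn_ball_div_measure_ball_le (h : IsDoublingWith μ Cd) {r ρ R : ℝ}
    (hr : 0 < r) (hρ : 0 < ρ) (hρr : ρ ≤ 2 * r) (hρR : ρ ≤ R) :
    totVarOn μ u (ball x ρ) / μ (ball x r) ≤ Cd * maximalVariation μ u R x := by
  refine ENNReal.div_le_of_le_mul ?_
  calc totVarOn μ u (ball x ρ) ≤ maximalVariation μ u R x * μ (ball x ρ) :=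
        h.totVarOn_ball_le hρ hρR
    _ ≤ maximalVariation μ u R x * (Cd * μ (ball x r)) := by
        gcongr
        exact (measure_mono (ball_subset_ball hρr)).trans (h x r hr).2.1
    _ = Cd * maximalVariation μ u R x * μ (ball x r) := by ring

variable [BorelSpace X]

namespace SupportsPoincare

theorem setLAverage_enorm_sub_setAverage_le_totVarOn (hP : SupportsPoincare μ CP)
    (h : IsDoublingWith μ Cd) (hu : AEStronglyMeasurable u μ) {r R : ℝ} (hr : 0 < r) (hrR : r < R)
    (hV : totVarOn μ u (ball x R) ≠ ⊤) :
    ⨍⁻ y in ball x r, ‖u y - ⨍ z in ball x r, u z ∂μ‖ₑ ∂μ ≤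
      ENNReal.ofReal CP * ENNReal.ofReal r * (totVarOn μ u (ball x R) / μ (ball x r)) := by
  rw [setLAverage_eq', ← eLpNorm_one_eq_lintegral_enorm]
  refine eLpNorm_sub_setAverage_le_totVarOn (h.measure_ball_pos x hr).ne'
    (h.measure_ball_lt_top x r) Measure.smul_absolutelyContinuous (by finiteness)
    (fun v K hv => ?_) hu.restrict hrR hV
  rw [eLpNorm_one_eq_lintegral_enorm, ← setLAverage_eq']
  exact hP.setLAverage_enorm_sub_setAverage_le h hv x hr

theorem enorm_setAverage_sub_le_maximalVariation (hP : SupportsPoincare μ CP)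
    (h : IsDoublingWith μ Cd) (hu : AEStronglyMeasurable u μ) (hx : LebesguePointOf μ u x) {s : ℝ}
    (hs : 0 < s) (hM : maximalVariation μ u (4 * s) x ≠ ⊤) :
    ‖(⨍ y in ball x (3 * s), u y ∂μ) - u x‖ₑ ≤
      6 * (Cd : ℝ≥0∞) ^ 2 * (ENNReal.ofReal CP * ENNReal.ofReal s) *
        maximalVariation μ u (4 * s) x := by
  have hint : IntegrableOn u (ball x (3 * s)) μ :=
    integrableOn_ball_of_totVarOn_ne_top (h.measure_ball_lt_top x _) hu.restrict
      (by linarith : 3 * s < 4 * s) (h.totVarOn_ball_ne_top (by positivity) le_rfl hM)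
  have hterm : ∀ k : ℕ, ⨍⁻ y in ball x (3 * s / 2 ^ k),
      ‖u y - ⨍ z in ball x (3 * s / 2 ^ k), u z ∂μ‖ₑ ∂μ ≤
        ENNReal.ofReal CP * (3 * ENNReal.ofReal s) * (Cd * maximalVariation μ u (4 * s) x) *
          2⁻¹ ^ k := by
    intro k
    have hR : 4 * s / 2 ^ k ≤ 4 * s := div_le_self (by positivity) (one_le_pow₀ one_le_two)
    refine (hP.setLAverage_enorm_sub_setAverage_le_totVarOn h hu (R := 4 * s / 2 ^ k)
      (by positivity) (by gcongr ?_ / _; linarith)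
      (h.totVarOn_ball_ne_top (by positivity) hR hM)).trans ?_
    rw [ENNReal.ofReal_div_of_pos (by positivity), ENNReal.ofReal_mul zero_le_three,
      ENNReal.ofReal_pow zero_le_two, ENNReal.ofReal_ofNat, ENNReal.ofReal_ofNat,
      div_eq_mul_inv, ← ENNReal.inv_pow, ← mul_assoc (ENNReal.ofReal CP), mul_right_comm]
    gcongr
    refine h.totVarOn_ball_div_measure_ball_le (by positivity) (by positivity) ?_ hR
    rw [← mul_div_assoc]
    gcongr ?_ / _
    linarith
  calc ‖(⨍ y in ball x (3 * s), u y ∂μ) - u x‖ₑ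
      ≤ Cd * ∑' k : ℕ, ⨍⁻ y in ball x (3 * s / 2 ^ k),
          ‖u y - ⨍ z in ball x (3 * s / 2 ^ k), u z ∂μ‖ₑ ∂μ :=
        hx.enorm_setAverage_sub_le_tsum h (by positivity) hint
    _ ≤ Cd * ∑' k : ℕ, ENNReal.ofReal CP * (3 * ENNReal.ofReal s) *
          (Cd * maximalVariation μ u (4 * s) x) * 2⁻¹ ^ k := by
        gcongr with k
        exact hterm k
    _ = 6 * (Cd : ℝ≥0∞) ^ 2 * (ENNReal.ofReal CP * ENNReal.ofReal s) *
          maximalVariation μ u (4 * s) x := by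
        rw [ENNReal.tsum_mul_left, ENNReal.tsum_geometric, ENNReal.one_sub_inv_two, inv_inv]
        ring

theorem eLpNorm_sub_setAverage_le_maximalVariation (hP : SupportsPoincare μ CP)
    (h : IsDoublingWith μ Cd) {p : ℝ≥0∞} (hp : 1 ≤ p) (hp_top : p ≠ ⊤)
    (hCd : (Cd : ℝ≥0∞) ^ (1 - p.toReal⁻¹) ≤ 3 / 2) (hu : AEStronglyMeasurable u μ) {s : ℝ}
    (hs : 0 < s) (hM : maximalVariation μ u (4 * s) x ≠ ⊤) :
    eLpNorm (fun y => u y - ⨍ z in ball x (3 * s), u z ∂μ) p μ[|ball x (2 * s)] ≤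
      7 * (Cd : ℝ≥0∞) ^ 7 * (ENNReal.ofReal CP * ENNReal.ofReal s) *
        maximalVariation μ u (4 * s) x := by
  have hac : μ[|ball x (2 * s)] ≪ μ.restrict (ball x (3 * s)) :=
    Measure.smul_absolutelyContinuous.trans (Measure.absolutelyContinuous_of_le
      (Measure.restrict_mono (ball_subset_ball (by linarith)) le_rfl))
  calc eLpNorm (fun y => u y - ⨍ z in ball x (3 * s), u z ∂μ) p μ[|ball x (2 * s)]
      ≤ 7 * (Cd : ℝ≥0∞) ^ 6 * (ENNReal.ofReal CP * ENNReal.ofReal s) *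
          (totVarOn μ u (ball x (4 * s)) / μ (ball x (3 * s))) :=
        eLpNorm_sub_setAverage_le_totVarOn (h.measure_ball_pos x (by positivity)).ne'
          (h.measure_ball_lt_top x _) hac (by finiteness)
          (fun v K hv => hP.eLpNorm_sub_setAverage_le h hp hp_top hCd hv x hs) hu.restrict
          (by linarith) (h.totVarOn_ball_ne_top (by positivity) le_rfl hM)
    _ ≤ 7 * (Cd : ℝ≥0∞) ^ 6 * (ENNReal.ofReal CP * ENNReal.ofReal s) *
          (Cd * maximalVariation μ u (4 * s) x) := by
        gcongr
        exact h.totVarOn_ball_div_measure_ball_le (by positivity) (by positivity) (by linarith)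
          le_rfl
    _ = 7 * (Cd : ℝ≥0∞) ^ 7 * (ENNReal.ofReal CP * ENNReal.ofReal s) *
          maximalVariation μ u (4 * s) x := by ring

theorem eLpNorm_sub_le_maximalVariation (hP : SupportsPoincare μ CP) (h : IsDoublingWith μ Cd)
    {p : ℝ≥0∞} (hp : 1 ≤ p) (hp_top : p ≠ ⊤) (hCd : (Cd : ℝ≥0∞) ^ (1 - p.toReal⁻¹) ≤ 3 / 2)
    (hu : AEStronglyMeasurable u μ) (hx : LebesguePointOf μ u x) {s : ℝ} (hs : 0 < s)
    (hM : maximalVariation μ u (4 * s) x ≠ ⊤) :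
    eLpNorm (fun y => u y - u x) p μ[|ball x (2 * s)] ≤
      13 * (Cd : ℝ≥0∞) ^ 7 * (ENNReal.ofReal CP * ENNReal.ofReal s) *
        maximalVariation μ u (4 * s) x := by
  have := h.isProbabilityMeasure_cond_ball x (mul_pos two_pos hs)
  set c := ⨍ z in ball x (3 * s), u z ∂μ
  set M := maximalVariation μ u (4 * s) x
  calc eLpNorm (fun y => u y - u x) p μ[|ball x (2 * s)]
      = eLpNorm ((fun y => u y - c) + fun _ => c - u x) p μ[|ball x (2 * s)] := by
        congr 1 with y
        exact (sub_add_sub_cancel _ _ _).symm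
    _ ≤ eLpNorm (fun y => u y - c) p μ[|ball x (2 * s)] + ‖c - u x‖ₑ := by
        refine (eLpNorm_add_le ((hu.mono_ac ProbabilityTheory.cond_absolutelyContinuous).sub
          aestronglyMeasurable_const) aestronglyMeasurable_const hp).trans (add_le_add le_rfl ?_)
        rw [eLpNorm_const _ (one_pos.trans_le hp).ne' (IsProbabilityMeasure.ne_zero _)]
        simp
    _ ≤ 7 * (Cd : ℝ≥0∞) ^ 7 * (ENNReal.ofReal CP * ENNReal.ofReal s) * M +
          6 * (Cd : ℝ≥0∞) ^ 7 * (ENNReal.ofReal CP * ENNReal.ofReal s) * M := by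
        gcongr
        · exact hP.eLpNorm_sub_setAverage_le_maximalVariation h hp hp_top hCd hu hs hM
        · refine (hP.enorm_setAverage_sub_le_maximalVariation h hu hx hs hM).trans ?_
          gcongr
          · exact h.one_le_of_point x
          · norm_num
    _ = 13 * (Cd : ℝ≥0∞) ^ 7 * (ENNReal.ofReal CP * ENNReal.ofReal s) * M := by ring

theorem ofReal_setAverage_rpow_le_maximalVariation (hP : SupportsPoincare μ CP)
    (h : IsDoublingWith μ Cd) {Q : ℝ} (hQ : 1 < Q) (hCdQ : (Cd : ℝ≥0∞) ^ (1 / Q) ≤ 3 / 2)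
    (hu : AEStronglyMeasurable u μ) (hx : LebesguePointOf μ u x) {r : ℝ} (hr : 0 < r) :
    ENNReal.ofReal ((⨍ y in ball x r, |u y - u x| ^ (Q / (Q - 1)) ∂μ) ^ ((Q - 1) / Q)) ≤
      ENNReal.ofReal ((13 * Cd ^ 7 * CP.toNNReal + 1) * r) * maximalVariation μ u (2 * r) x := by
  by_cases hM : maximalVariation μ u (2 * r) x = ⊤
  · rw [hM, ENNReal.mul_top (by simpa using by positivity)]
    exact le_top
  have hQ1 : 0 < Q - 1 := sub_pos.2 hQ
  have hp : 1 ≤ Q / (Q - 1) := (one_le_div hQ1).2 (sub_le_self Q zero_le_one)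
  have hexp : 1 - (ENNReal.ofReal (Q / (Q - 1))).toReal⁻¹ = 1 / Q := by
    rw [ENNReal.toReal_ofReal (by linarith)]
    field_simp
    ring
  have key := hP.eLpNorm_sub_le_maximalVariation h (p := ENNReal.ofReal (Q / (Q - 1)))
    (ENNReal.one_le_ofReal.2 hp) ENNReal.ofReal_ne_top (by rwa [hexp]) hu hx (half_pos hr)
    (by rwa [show 4 * (r / 2) = 2 * r by ring])
  rw [show 4 * (r / 2) = 2 * r by ring, mul_div_cancel₀ r two_ne_zero] at key
  have hconst : 13 * (Cd : ℝ≥0∞) ^ 7 * (ENNReal.ofReal CP * ENNReal.ofReal (r / 2)) ≤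
      ENNReal.ofReal ((13 * Cd ^ 7 * CP.toNNReal + 1) * r) := by
    calc 13 * (Cd : ℝ≥0∞) ^ 7 * (ENNReal.ofReal CP * ENNReal.ofReal (r / 2))
        = ENNReal.ofReal (13 * Cd ^ 7 * (CP.toNNReal * (r / 2))) := by
          rw [ENNReal.ofReal_mul (by positivity), ENNReal.ofReal_mul (by positivity),
            ENNReal.ofReal_mul (by positivity), ENNReal.ofReal_pow (by positivity)]
          simp only [ENNReal.ofReal_ofNat, ENNReal.ofReal_coe_nnreal, ENNReal.ofNNReal_toNNReal]
      _ ≤ ENNReal.ofReal ((13 * Cd ^ 7 * CP.toNNReal + 1) * r) := by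
          have : (0 : ℝ) ≤ 13 * Cd ^ 7 * CP.toNNReal * r := by positivity
          exact ENNReal.ofReal_le_ofReal (by linarith)
  rw [setAverage_eq', ← inv_div Q (Q - 1)]
  exact (ofReal_integral_rpow_le_eLpNorm (fun y => u y - u x) (by linarith)).trans
    (key.trans (by gcongr))

end SupportsPoincare

end MaximalVariation

theorem exists_rpow_one_div_le_three_halves (Cd : ℝ≥0) :
    ∃ Q : ℝ, 1 < Q ∧ (Cd : ℝ≥0∞) ^ (1 / Q) ≤ 3 / 2 := by
  have h32 : (1 : ℝ≥0∞) < 3 / 2 := by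
    rw [ENNReal.lt_div_iff_mul_lt (by simp) (by simp)]
    norm_num
  obtain ⟨n, hn, hn1⟩ := ((ENNReal.eventually_pow_one_div_le ENNReal.coe_ne_top h32).and
    (eventually_gt_atTop 1)).exists
  exact ⟨n, by exact_mod_cast hn1, hn⟩

theorem statement17_general (Cd : ℝ≥0) (CP : ℝ) :
    ∃ C : ℝ, 1 ≤ C ∧ ∃ Q : ℝ, 1 < Q ∧
      ∀ (X : Type u) [MetricSpace X] [MeasurableSpace X] [BorelSpace X]
        (μ : Measure X), IsDoublingWith μ Cd → SupportsPoincare μ CP →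
        ∀ u : X → ℝ, AEStronglyMeasurable u μ →
          ∀ x : X, LebesguePointOf μ u x →
            ∀ r : ℝ, 0 < r →
              ENNReal.ofReal
                  ((⨍ y in ball x r, |u y - u x| ^ (Q / (Q - 1)) ∂μ) ^ ((Q - 1) / Q)) ≤
                ENNReal.ofReal (C * r) *
                  ⨆ (ρ : ℝ) (_ : 0 < ρ) (_ : ρ ≤ 2 * r),
                    totVarOn μ u (ball x ρ) / μ (ball x ρ) := by
  obtain ⟨Q, hQ, hCdQ⟩ := exists_rpow_one_div_le_three_halves Cd
  exact ⟨13 * Cd ^ 7 * CP.toNNReal + 1, le_add_of_nonneg_left (by positivity), Q, hQ,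
    fun X _ _ _ μ h hP u hu x hx r hr =>
      hP.ofReal_setAverage_rpow_le_maximalVariation h hQ hCdQ hu hx hr⟩

theorem statement17 (Cd : ℝ≥0) (CP : ℝ) (hCd : 1 ≤ Cd) (hCP : 0 < CP) :
    ∃ C : ℝ, 1 ≤ C ∧ ∃ Q : ℝ, 1 < Q ∧
      ∀ (X : Type u) [MetricSpace X] [MeasurableSpace X] [BorelSpace X]
        (μ : Measure X), GoodSpace X μ Cd CP →
        ∀ u : X → ℝ, IsBV μ u →
          ∀ x : X, LebesguePointOf μ u x →
            ∀ r : ℝ, 0 < r →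
              ENNReal.ofReal
                  ((⨍ y in ball x r, |u y - u x| ^ (Q / (Q - 1)) ∂μ) ^ ((Q - 1) / Q)) ≤
                ENNReal.ofReal (C * r) *
                  ⨆ (ρ : ℝ) (_ : 0 < ρ) (_ : ρ ≤ 2 * r),
                    totVarOn μ u (ball x ρ) / μ (ball x ρ) := by
  obtain ⟨C, hC, Q, hQ, key⟩ := statement17_general.{u} Cd CP
  exact ⟨C, hC, Q, hQ, fun X _ _ _ μ hX u hu =>
    have := hX.2.2.2.1.secondCountableTopology
    key X μ hX.2.2.2.1 hX.2.2.2.2 u hu.1.aestronglyMeasurable⟩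

end
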